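/- Let G be a countable ICC group without property (T). Then G admits a unitary representation π on a Hilbert space which is weakly mixing (has no non-zero finite-dimensional subrepresentation) and has a sequence of unit vectors (ξᵢ) with ‖π(s)ξᵢ − ξᵢ‖ → 0 for every s ∈ G. -/

import Mathlib

open Filter

noncomputable section

/-- A unitary representation of a group `G`: a complex Hilbert space together with a
multiplicative action of `G` by unitary operators. -/
structure UnitaryRep (G : Type) [Group G] : Type 1 where
  H : Type
  [nacg : NormedAddCommGroup H]
  [ips : InnerProductSpace ℂ H]
  [cs : CompleteSpace H]
  π : G →* (H →L[ℂ] H)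
  unitary : ∀ g : G, π g ∈ unitary (H →L[ℂ] H)

attribute [instance] UnitaryRep.nacg UnitaryRep.ips UnitaryRep.cs

/-- A unitary representation is weakly mixing if it has no non-zero finite-dimensional
subrepresentation (invariant subspace). -/
def UnitaryRep.WeaklyMixing {G : Type} [Group G] (ρ : UnitaryRep G) : Prop :=
  ∀ K : Submodule ℂ ρ.H, (∀ (g : G), ∀ v ∈ K, ρ.π g v ∈ K) →
    FiniteDimensional ℂ K → K = ⊥

/-- Kazhdan's property (T) for a group `G`: there exist a finite `Q ⊆ G` and `ε > 0` such
that every unitary representation with a `(Q, ε)`-invariant unit vector has a non-zero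
invariant vector. -/
def GroupHasPropertyT (G : Type) [Group G] : Prop :=
  ∃ (Q : Finset G) (ε : ℝ), 0 < ε ∧
    ∀ ρ : UnitaryRep G, ∀ ξ : ρ.H, ‖ξ‖ = 1 → (∀ g ∈ Q, ‖ρ.π g ξ - ξ‖ ≤ ε) →
      ∃ v : ρ.H, v ≠ 0 ∧ ∀ g : G, ρ.π g v = v

/-- `G` is ICC: every non-trivial conjugacy class is infinite. -/
def IsICC (G : Type) [Group G] : Prop :=
  ∀ g : G, g ≠ 1 → {h : G | ∃ k : G, k * g * k⁻¹ = h}.Infinite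


open scoped ComplexOrder Matrix InnerProductSpace

/-- Entrywise limits of positive semidefinite kernels are positive semidefinite. -/
theorem posSemidef_of_tendsto {X : Type} (A : ℕ → Matrix X X ℂ) (B : Matrix X X ℂ)
    (hA : ∀ n, (A n).PosSemidef)
    (h : ∀ x y, Tendsto (fun n => A n x y) atTop (nhds (B x y))) : B.PosSemidef := by
  refine ⟨?_, fun f => ?_⟩
  · ext x y
    refine tendsto_nhds_unique ?_ (h x y)
    have h1 := (h y x).star
    refine h1.congr fun n => ?_
    exact (hA n).isHermitian.apply x y
  · refine ge_of_tendsto' (f := fun n => f.sum fun i xi ↦ f.sum fun j xj ↦ star xi * A n i j * xj) (x := atTop) ?_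
      (fun n => (hA n).2 f)
    simp only [Finsupp.sum]
    refine tendsto_finsetSum _ fun i _ => tendsto_finsetSum _ fun j _ => ?_
    exact ((h i j).const_mul _).mul_const _

/-- Rank-one kernels are positive semidefinite. -/
theorem posSemidef_rankOne {X : Type} (r : X → ℝ) :
    (Matrix.of fun x y => ((r x * r y : ℝ) : ℂ)).PosSemidef := by
  refine ⟨?_, fun f => ?_⟩
  · ext x y
    simp [mul_comm]
  · have : (f.sum fun i xi ↦ f.sum fun j xj ↦
        star xi * (Matrix.of fun x y => ((r x * r y : ℝ) : ℂ)) i j * xj)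
        = star (f.sum fun i xi => (r i : ℂ) * xi) * (f.sum fun i xi => (r i : ℂ) * xi) := by
      simp only [Finsupp.sum, star_sum, Finset.sum_mul_sum]
      refine Finset.sum_congr rfl fun i _ => Finset.sum_congr rfl fun j _ => ?_
      simp
      ring
    rw [this]
    exact star_mul_self_nonneg _

/-- Gram kernels are positive semidefinite. -/
theorem posSemidef_gramKernel {X E : Type} [NormedAddCommGroup E] [InnerProductSpace ℂ E]
    (v : X → E) : (Matrix.of fun x y => inner ℂ (v x) (v y)).PosSemidef := by
  refine ⟨?_, fun f => ?_⟩
  · ext x y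
    simp
  · have : (f.sum fun i xi ↦ f.sum fun j xj ↦
        star xi * (Matrix.of fun x y => inner ℂ (v x) (v y)) i j * xj)
        = inner ℂ (f.sum fun i xi => xi • v i) (f.sum fun i xi => xi • v i) := by
      simp only [Finsupp.sum, sum_inner]
      refine Finset.sum_congr rfl fun i _ => ?_
      rw [inner_sum]
      refine Finset.sum_congr rfl fun j _ => ?_
      simp only [inner_smul_left, inner_smul_right]
      simp
      ring
    rw [this]
    rw [← inner_self_ofReal_re, RCLike.ofReal_nonneg]
    exact inner_self_nonneg

theorem posSemidef_pow_entry {X : Type} (A : Matrix X X ℂ) (hA : A.PosSemidef) (k : ℕ) :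
    (Matrix.of fun x y => A x y ^ k).PosSemidef := by
  induction k with
  | zero =>
    convert posSemidef_rankOne (X := X) (fun _ => 1) using 1
    ext x y; simp
  | succ k ih =>
    have h := ih.hadamard hA
    have e : (Matrix.of fun x y => A x y ^ (k + 1)) = (Matrix.of fun x y => A x y ^ k) ⊙ A := by
      ext x y
      simp [pow_succ]
    rw [e]
    exact h

/-- The entrywise exponential of a positive semidefinite kernel is positive semidefinite. -/
theorem posSemidef_exp_entry {X : Type} (A : Matrix X X ℂ) (hA : A.PosSemidef) :
    (Matrix.of fun x y => Complex.exp (A x y)).PosSemidef := by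
  refine posSemidef_of_tendsto
    (fun N => ∑ k ∈ Finset.range N, ((k.factorial : ℂ)⁻¹) • (Matrix.of fun x y => A x y ^ k)) _
    (fun N => Matrix.posSemidef_sum _ fun k _ => (posSemidef_pow_entry A hA k).smul (by
      rw [inv_nonneg]; exact Nat.cast_nonneg _)) fun x y => ?_
  have := (NormedSpace.expSeries_div_hasSum_exp (A x y)).tendsto_sum_nat
  rw [← Complex.exp_eq_exp_ℂ] at this
  refine this.congr fun N => ?_
  simp [Matrix.sum_apply, div_eq_inv_mul]

/-- Finitely supported functions on `X`, as a pre-Hilbert space for the kernel `K`. -/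
def PreGNS {X : Type} (_K : Matrix X X ℂ) : Type := X →₀ ℂ

instance {X : Type} (K : Matrix X X ℂ) : AddCommGroup (PreGNS K) :=
  inferInstanceAs (AddCommGroup (X →₀ ℂ))

instance {X : Type} (K : Matrix X X ℂ) : Module ℂ (PreGNS K) :=
  inferInstanceAs (Module ℂ (X →₀ ℂ))

/-- The sesquilinear form on finitely supported functions. -/
def gnsForm {X : Type} (K : Matrix X X ℂ) (f g : X →₀ ℂ) : ℂ :=
  f.sum fun x a => g.sum fun y b => star a * K x y * b

theorem gnsForm_symm {X : Type} (K : Matrix X X ℂ) (hK : K.PosSemidef) (f g : X →₀ ℂ) :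
    star (gnsForm K g f) = gnsForm K f g := by
  unfold gnsForm
  rw [Finsupp.sum_comm]
  simp only [Finsupp.sum, star_sum]
  refine Finset.sum_congr rfl fun i _ => Finset.sum_congr rfl fun j _ => ?_
  rw [← hK.isHermitian.apply i j]
  simp only [star_mul, star_star]
  ring

theorem gnsForm_add {X : Type} (K : Matrix X X ℂ) (f g h : X →₀ ℂ) :
    gnsForm K (f + g) h = gnsForm K f h + gnsForm K g h := by
  unfold gnsForm
  rw [Finsupp.sum_add_index']
  · simp
  · intro x a b
    simp [← Finsupp.sum_add, add_mul]

theorem gnsForm_smul {X : Type} (K : Matrix X X ℂ) (f g : X →₀ ℂ) (r : ℂ) :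
    gnsForm K (r • f) g = star r * gnsForm K f g := by
  unfold gnsForm
  rw [Finsupp.sum_smul_index]
  · simp [Finsupp.mul_sum, ← mul_assoc]
  · simp

/-- The pre-inner product given by the kernel. -/
@[reducible] def gnsCore {X : Type} (K : Matrix X X ℂ) (hK : K.PosSemidef) :
    PreInnerProductSpace.Core ℂ (PreGNS K) where
  inner f g := gnsForm K f g
  conj_inner_symm f g := gnsForm_symm K hK f g
  re_inner_nonneg f := (RCLike.nonneg_iff.1 (hK.2 f)).1
  add_left f g h := gnsForm_add K f g h
  smul_left f g r := gnsForm_smul K f g r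

theorem gnsForm_single {X : Type} (K : Matrix X X ℂ) (x y : X) :
    gnsForm K (Finsupp.single x 1) (Finsupp.single y 1) = K x y := by
  simp [gnsForm]

theorem gnsForm_mapDomain {X : Type} (K : Matrix X X ℂ) (e : X → X) 
    (h : ∀ x y, K (e x) (e y) = K x y) (f g : X →₀ ℂ) :
    gnsForm K (f.mapDomain e) (g.mapDomain e) = gnsForm K f g := by
  unfold gnsForm
  rw [Finsupp.sum_mapDomain_index]
  · refine Finsupp.sum_congr fun x _ => ?_
    rw [Finsupp.sum_mapDomain_index]
    · refine Finsupp.sum_congr fun y _ => ?_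
      rw [h]
    · simp
    · intros; ring
  · simp
  · intros
    simp [← Finsupp.sum_add, add_mul]

theorem gns_exists {G X : Type} [Group G] [MulAction G X] (K : Matrix X X ℂ) (hK : K.PosSemidef)
    (hinv : ∀ (g : G) x y, K (g • x) (g • y) = K x y) :
    ∃ (ρ : UnitaryRep G) (δ : X → ρ.H), (∀ x y, inner ℂ (δ x) (δ y) = K x y) ∧
      (∀ g x, ρ.π g (δ x) = δ (g • x)) ∧
      Dense (Submodule.span ℂ (Set.range δ) : Set ρ.H) := by
  let core := gnsCore K hK
  let n1 : SeminormedAddCommGroup (PreGNS K) :=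
    InnerProductSpace.Core.toSeminormedAddCommGroup (𝕜 := ℂ)
  let n2 : InnerProductSpace ℂ (PreGNS K) := .ofCore _
  have hin : ∀ f g : PreGNS K, inner ℂ f g = gnsForm K f g := fun f g => rfl
  let T (g : G) : PreGNS K →ₗ[ℂ] PreGNS K := Finsupp.lmapDomain ℂ ℂ (fun x : X => g • x)
  have hT : ∀ g f, T g f = Finsupp.mapDomain (fun x : X => g • x) (f : X →₀ ℂ) := fun g f => rfl
  have hTi : ∀ g f f', inner ℂ (T g f) (T g f') = inner ℂ f f' := by
    intro g f f'
    rw [hin, hin, hT, hT]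
    exact gnsForm_mapDomain K _ (hinv g) f f'
  let I (g : G) : PreGNS K →L[ℂ] PreGNS K := ((T g).isometryOfInner (hTi g)).toContinuousLinearMap
  have hI : ∀ g f, I g f = T g f := fun g f => rfl
  let P (g : G) : UniformSpace.Completion (PreGNS K) →L[ℂ] UniformSpace.Completion (PreGNS K) :=
    (I g).completion
  have hP : ∀ g (f : PreGNS K), P g (f : UniformSpace.Completion (PreGNS K)) = (T g f : PreGNS K) :=
    fun g f => ContinuousLinearMap.completion_apply_coe (I g) f
  have hP1 : P 1 = 1 := by
    ext v
    induction v using UniformSpace.Completion.induction_on with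
    | hp => exact isClosed_eq (P 1).continuous (ContinuousLinearMap.continuous _)
    | ih f =>
      rw [hP, hT]
      simp only [one_smul]
      exact congrArg _ Finsupp.mapDomain_id
  have hPm : ∀ g h, P (g * h) = P g * P h := by
    intro g h
    ext v
    induction v using UniformSpace.Completion.induction_on with
    | hp => exact isClosed_eq (P _).continuous (ContinuousLinearMap.continuous _)
    | ih f =>
      rw [mul_apply_eq_comp, hP, hP, hP, hT, hT, hT]
      simp only [mul_smul]
      exact congrArg _ Finsupp.mapDomain_comp
  have hPi : ∀ g v w, inner ℂ (P g v) (P g w) = inner ℂ v w := by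
    intro g v w
    induction v, w using UniformSpace.Completion.induction_on₂ with
    | hp =>
      exact isClosed_eq (((P g).continuous.comp continuous_fst).inner
        ((P g).continuous.comp continuous_snd)) (continuous_fst.inner continuous_snd)
    | ih f f' => rw [hP, hP, UniformSpace.Completion.inner_coe, hTi,
        UniformSpace.Completion.inner_coe]
  have hU : ∀ g, P g ∈ unitary (UniformSpace.Completion (PreGNS K) →L[ℂ] _) := by
    intro g
    have h1 : ∀ g, star (P g) * P g = 1 := by
      intro g
      ext v
      refine ext_inner_left ℂ fun w => ?_
      rw [mul_apply_eq_comp, ContinuousLinearMap.star_eq_adjoint,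
        ContinuousLinearMap.adjoint_inner_right, hPi]
      rfl
    have h2 : P g * P g⁻¹ = 1 := by rw [← hPm, mul_inv_cancel, hP1]
    refine Unitary.mem_iff.2 ⟨h1 g, ?_⟩
    have h3 : star (P g) = P g⁻¹ := by
      calc star (P g) = star (P g) * (P g * P g⁻¹) := by rw [h2, mul_one]
        _ = P g⁻¹ := by rw [← mul_assoc, h1, one_mul]
    rw [h3, h2]
  let sg (x : X) : PreGNS K := (Finsupp.single x 1 : X →₀ ℂ)
  refine ⟨⟨UniformSpace.Completion (PreGNS K), ⟨⟨P, hP1⟩, hPm⟩, hU⟩, 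
    fun x => (sg x : PreGNS K), ?_, ?_, ?_⟩
  · intro x y
    refine (UniformSpace.Completion.inner_coe _ _).trans ?_
    exact gnsForm_single K x y
  · intro g x
    refine (hP g _).trans ?_
    rw [hT]
    refine congrArg _ ?_
    exact Finsupp.mapDomain_single
  · refine Dense.mono ?_ (UniformSpace.Completion.denseRange_coe (α := PreGNS K))
    rintro _ ⟨f, rfl⟩
    have key : ∀ f : X →₀ ℂ, ((show PreGNS K from f : PreGNS K) : UniformSpace.Completion (PreGNS K)) ∈ 
        Submodule.span ℂ (Set.range fun x => ((sg x : PreGNS K) : UniformSpace.Completion (PreGNS K))) := by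
      intro f
      induction f using Finsupp.induction_linear with
      | zero => exact Submodule.zero_mem _
      | add f g hf hg =>
        have := Submodule.add_mem _ hf hg
        rw [← UniformSpace.Completion.coe_add] at this
        exact this
      | single x a =>
        have h := Submodule.smul_mem (Submodule.span ℂ (Set.range fun x => ((sg x : PreGNS K) : UniformSpace.Completion (PreGNS K)))) a
          (Submodule.subset_span ⟨x, rfl⟩)
        rw [← UniformSpace.Completion.coe_smul] at h
        convert h using 2
        change Finsupp.single x a = a • Finsupp.single x (1:ℂ)
        simp
    exact key f

theorem UnitaryRep.inner_map {G : Type} [Group G] (ρ : UnitaryRep G) (g : G) (v w : ρ.H) :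
    inner ℂ (ρ.π g v) (ρ.π g w) = inner ℂ v w := by
  have h := (Unitary.mem_iff.1 (ρ.unitary g)).1
  rw [← ContinuousLinearMap.adjoint_inner_right, ← ContinuousLinearMap.star_eq_adjoint,
    ← mul_apply_eq_comp, h]
  rfl

theorem UnitaryRep.norm_map {G : Type} [Group G] (ρ : UnitaryRep G) (g : G) (v : ρ.H) :
    ‖ρ.π g v‖ = ‖v‖ := by
  have h := ρ.inner_map g v v
  rw [inner_self_eq_norm_sq_to_K, inner_self_eq_norm_sq_to_K] at h
  have h2 : ‖ρ.π g v‖ ^ 2 = ‖v‖ ^ 2 := by exact_mod_cast h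
  exact (sq_eq_sq₀ (norm_nonneg _) (norm_nonneg _)).1 h2

theorem UnitaryRep.mul_map {G : Type} [Group G] (ρ : UnitaryRep G) (g h : G) (v : ρ.H) :
    ρ.π (g * h) v = ρ.π g (ρ.π h v) := by
  rw [map_mul]; rfl

theorem UnitaryRep.one_map {G : Type} [Group G] (ρ : UnitaryRep G) (v : ρ.H) :
    ρ.π 1 v = v := by
  rw [map_one]; rfl

theorem UnitaryRep.inner_inv {G : Type} [Group G] (ρ : UnitaryRep G) (g : G) (v w : ρ.H) :
    inner ℂ (ρ.π g v) w = inner ℂ v (ρ.π g⁻¹ w) := by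
  rw [← ρ.inner_map g v, ← ρ.mul_map, mul_inv_cancel, ρ.one_map]

/-- Bounded sequences converging weakly to zero against a total set converge weakly to zero. -/
theorem weak_tendsto_of_total {H : Type} [NormedAddCommGroup H] [InnerProductSpace ℂ H]
    (S : Set H) (hS : Dense (Submodule.span ℂ S : Set H)) (u : ℕ → H) (C : ℝ)
    (hC : ∀ k, ‖u k‖ ≤ C)
    (h : ∀ s ∈ S, Tendsto (fun k => inner ℂ (u k) s) atTop (nhds 0)) (v : H) :
    Tendsto (fun k => inner ℂ (u k) v) atTop (nhds 0) := by
  have hspan : ∀ s ∈ Submodule.span ℂ S, Tendsto (fun k => inner ℂ (u k) s) atTop (nhds 0) := by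
    intro s hs
    induction hs using Submodule.span_induction with
    | mem x hx => exact h x hx
    | zero => simp
    | add x y _ _ hx hy => simpa [inner_add_right] using hx.add hy
    | smul a x _ hx => simpa [inner_smul_right] using hx.const_mul a
  rw [Metric.tendsto_atTop]
  intro ε hε
  have hC0 : 0 ≤ C := (norm_nonneg _).trans (hC 0)
  obtain ⟨s, hs, hd⟩ := Metric.dense_iff.1 hS v (ε / (2 * (C + 1))) (by positivity)
  obtain ⟨N, hN⟩ := (Metric.tendsto_atTop.1 (hspan s hd)) (ε / 2) (by positivity)
  refine ⟨N, fun k hk => ?_⟩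
  have h1 := hN k hk
  rw [dist_zero_right] at h1 ⊢
  have h2 : inner ℂ (u k) v = inner ℂ (u k) s + inner ℂ (u k) (v - s) := by
    rw [← inner_add_right]; congr 1; abel
  have h3 : ‖inner ℂ (u k) (v - s)‖ ≤ C * (ε / (2 * (C + 1))) := by
    refine (norm_inner_le_norm _ _).trans ?_
    have : ‖v - s‖ ≤ ε / (2 * (C + 1)) := by
      rw [← dist_eq_norm, dist_comm]; exact (Metric.mem_ball.1 hs).le
    exact mul_le_mul (hC k) this (norm_nonneg _) hC0
  have h4 : C * (ε / (2 * (C + 1))) ≤ ε / 2 := by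
    rw [mul_div_assoc', div_le_div_iff₀ (by positivity) (by positivity)]
    nlinarith
  rw [h2]
  refine (norm_add_le _ _).trans_lt ?_
  linarith

theorem weaklyMixing_of_total {G : Type} [Group G] (ρ : UnitaryRep G) (S : Set ρ.H)
    (hS : Dense (Submodule.span ℂ S : Set ρ.H)) (γ : ℕ → G)
    (h : ∀ s ∈ S, ∀ t ∈ S, Tendsto (fun k => inner ℂ (ρ.π (γ k) s) t) atTop (nhds 0)) :
    ρ.WeaklyMixing := by
  have h1 : ∀ s ∈ S, ∀ w : ρ.H, Tendsto (fun k => inner ℂ (ρ.π (γ k) s) w) atTop (nhds 0) :=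
    fun s hs w => weak_tendsto_of_total S hS _ ‖s‖ (fun k => (ρ.norm_map _ _).le) (h s hs) w
  have h2 : ∀ v w : ρ.H, Tendsto (fun k => inner ℂ (ρ.π (γ k) v) w) atTop (nhds 0) := by
    intro v w
    have h3 := weak_tendsto_of_total S hS (fun k => ρ.π (γ k)⁻¹ w) ‖w‖
      (fun k => (ρ.norm_map _ _).le) (fun s hs => by
        have h5 := (h1 s hs w).star
        rw [star_zero] at h5
        refine h5.congr fun k => ?_
        rw [ρ.inner_inv]
        exact inner_conj_symm _ _) v
    have h6 := h3.star
    rw [star_zero] at h6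
    refine h6.congr fun k => ?_
    rw [ρ.inner_inv (γ k)]
    exact inner_conj_symm _ _
  intro K hK hfin
  rw [Submodule.eq_bot_iff]
  intro v hv
  let b := stdOrthonormalBasis ℂ K
  have h3 : ∀ k, ∑ i, ‖inner ℂ (ρ.π (γ k) v) (b i : ρ.H)‖ ^ 2 = ‖v‖ ^ 2 := by
    intro k
    have := b.sum_sq_norm_inner_left ⟨ρ.π (γ k) v, hK _ _ hv⟩
    rw [Submodule.coe_norm, ρ.norm_map] at this
    rw [← this]
    rfl
  have h4 : Tendsto (fun k => ∑ i, ‖inner ℂ (ρ.π (γ k) v) (b i : ρ.H)‖ ^ 2) atTop (nhds 0) := by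
    have := tendsto_finsetSum (Finset.univ) fun i _ => ((h2 v (b i : ρ.H)).norm.pow 2)
    simpa using this
  simp only [h3] at h4
  have h5 := tendsto_nhds_unique h4 tendsto_const_nhds
  have : ‖v‖ = 0 := by
    exact pow_eq_zero_iff (two_ne_zero) |>.1 h5.symm
  exact norm_eq_zero.1 this

/-- A vector moved by less than its norm by the whole group gives a nonzero invariant vector. -/
theorem exists_invariant_of_close {G : Type} [Group G] (ρ : UnitaryRep G) (ξ : ρ.H)
    (hξ : ‖ξ‖ = 1) (h : ∀ g, ‖ρ.π g ξ - ξ‖ < 1) :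
    ∃ v : ρ.H, v ≠ 0 ∧ ∀ g, ρ.π g v = v := by
  let : InnerProductSpace ℝ ρ.H := InnerProductSpace.rclikeToReal ℂ ρ.H
  let O : Set ρ.H := Set.range fun g => ρ.π g ξ
  let C : Set ρ.H := closure (convexHull ℝ O)
  have hCne : C.Nonempty := ⟨_, subset_closure (subset_convexHull ℝ O ⟨1, rfl⟩)⟩
  have hCconv : Convex ℝ C := (convex_convexHull ℝ O).closure
  obtain ⟨v, hv, hmin⟩ := exists_norm_eq_iInf_of_complete_convex hCne
    (isClosed_closure.isComplete) hCconv (0 : ρ.H)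
  have hmin' : ∀ w ∈ C, ‖v‖ ≤ ‖w‖ := by
    intro w hw
    have h1 : ‖(0:ρ.H) - v‖ ≤ ‖(0 : ρ.H) - w‖ := by
      rw [hmin]
      exact ciInf_le ⟨0, by rintro _ ⟨x, rfl⟩; positivity⟩ (⟨w, hw⟩ : C)
    simpa using h1
  have hinv : ∀ g, ∀ w ∈ C, ρ.π g w ∈ C := by
    intro g w hw
    have hsub : (convexHull ℝ O) ⊆ (ρ.π g) ⁻¹' (convexHull ℝ O) := by
      refine convexHull_min ?_ ?_
      · rintro _ ⟨k, rfl⟩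
        refine subset_convexHull ℝ O ⟨g * k, ?_⟩
        exact ρ.mul_map _ _ _
      · exact (convex_convexHull ℝ O).linear_preimage ((ρ.π g).restrictScalars ℝ).toLinearMap
    exact closure_minimal (hsub.trans (Set.preimage_mono subset_closure))
      (isClosed_closure.preimage (ρ.π g).continuous) hw
  have hhalf : ∀ w ∈ C, (1:ℝ) / 2 ≤ RCLike.re (inner ℂ ξ w) := by
    have hcl : IsClosed {w : ρ.H | (1:ℝ) / 2 ≤ RCLike.re (inner ℂ ξ w)} :=
      isClosed_le continuous_const (RCLike.continuous_re.comp (continuous_const.inner continuous_id))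
    have hcv : Convex ℝ {w : ρ.H | (1:ℝ) / 2 ≤ RCLike.re (inner ℂ ξ w)} := by
      intro x hx y hy a b ha hb hab
      simp only [Set.mem_ofPred_eq] at *
      have e : ∀ (a : ℝ) (x : ρ.H), RCLike.re (inner ℂ ξ (a • x)) = a * RCLike.re (inner ℂ ξ x) := by
        intro a x
        rw [inner_smul_right_eq_smul]
        simp
      rw [inner_add_right, map_add, e, e]
      nlinarith
    refine fun w hw => closure_minimal (convexHull_min ?_ hcv) hcl hw
    rintro _ ⟨g, rfl⟩
    have h1 := h g
    have h2 := norm_sub_sq (𝕜 := ℂ) (ρ.π g ξ) ξ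
    rw [ρ.norm_map, hξ, ← inner_re_symm] at h2
    have h3 : ‖ρ.π g ξ - ξ‖ ^ 2 < 1 := by
      have := norm_nonneg (ρ.π g ξ - ξ)
      nlinarith
    simp only [Set.mem_ofPred_eq]
    linarith
  refine ⟨v, ?_, fun g => ?_⟩
  · rintro rfl
    have := hhalf 0 hv
    simp at this
    linarith
  · have hw := hinv g v hv
    have hm := hmin' _ (hCconv hv hw (a := 1/2) (b := 1/2) (by norm_num) (by norm_num) (by norm_num))
    rw [← smul_add, norm_smul] at hm
    have hp := parallelogram_law_with_norm ℂ v (ρ.π g v)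
    rw [ρ.norm_map] at hp
    have hh : ‖(1/2:ℝ)‖ = 1/2 := by norm_num
    rw [hh] at hm
    have h0 := norm_nonneg v
    have h6 : ‖v - ρ.π g v‖ = 0 := by
      have := norm_nonneg (v - ρ.π g v)
      have := norm_nonneg (v + ρ.π g v)
      nlinarith
    rw [norm_eq_zero, sub_eq_zero] at h6
    exact h6.symm

/-- The normalised kernels `exp (-t F)` assembled over a sequence of parameters are positive
semidefinite. -/
theorem posSemidef_mainKernel {G : Type} [Group G] (ρ : ℕ → UnitaryRep G) (ξ : ∀ j, (ρ j).H)
    (c : ℕ → ℝ) (hc : ∀ j, 0 ≤ c j) (t : ℕ → ℝ) (ht : ∀ n, 0 ≤ t n)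
    (F : G → ℂ)
    (hF : ∀ g, HasSum (fun j => (c j : ℂ) * (1 - inner ℂ (ξ j) ((ρ j).π g (ξ j)))) (F g)) :
    (Matrix.of fun x y : (Σ _ : ℕ, G) =>
      (1 : Matrix ℕ ℕ ℂ) x.1 y.1 * Complex.exp (-(t x.1 : ℂ) * F (x.2⁻¹ * y.2))).PosSemidef := by
  let M (j : ℕ) : Matrix (Σ _ : ℕ, G) (Σ _ : ℕ, G) ℂ := Matrix.of fun x y =>
    inner ℂ (((√(t x.1 * c j) : ℝ) : ℂ) • (ρ j).π x.2 (ξ j))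
      (((√(t y.1 * c j) : ℝ) : ℂ) • (ρ j).π y.2 (ξ j))
  have hM : ∀ j, (M j).PosSemidef := fun j => posSemidef_gramKernel _
  let r (N : ℕ) (x : Σ _ : ℕ, G) : ℝ := Real.exp (-(∑ j ∈ Finset.range N, t x.1 * c j) / 2)
  let A (N : ℕ) : Matrix (Σ _ : ℕ, G) (Σ _ : ℕ, G) ℂ :=
    ((1 : Matrix ℕ ℕ ℂ).submatrix Sigma.fst Sigma.fst) ⊙
      ((Matrix.of fun x y => Complex.exp ((∑ j ∈ Finset.range N, M j) x y)) ⊙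
        (Matrix.of fun x y => ((r N x * r N y : ℝ) : ℂ)))
  have hA : ∀ N, (A N).PosSemidef := fun N =>
    (Matrix.PosSemidef.one.submatrix Sigma.fst).hadamard
      ((posSemidef_exp_entry _ (Matrix.posSemidef_sum _ fun j _ => hM j)).hadamard
        (posSemidef_rankOne (r N)))
  refine posSemidef_of_tendsto A _ hA ?_
  rintro ⟨n, g⟩ ⟨m, h⟩
  by_cases hnm : n = m
  · subst hnm
    have h1 := ((hF (g⁻¹ * h)).tendsto_sum_nat.const_mul (-(t n : ℂ))).cexp
    simp only [Matrix.of_apply, Matrix.one_apply_eq, one_mul]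
    refine h1.congr fun N => ?_
    simp only [A, Matrix.hadamard_apply, Matrix.submatrix_apply, Matrix.one_apply_eq, one_mul,
      Matrix.of_apply, r]
    rw [← Real.exp_add, Complex.ofReal_exp, ← Complex.exp_add]
    congr 1
    rw [Matrix.sum_apply]
    have hM' : ∀ j, M j ⟨n, g⟩ ⟨n, h⟩
        = (t n : ℂ) * c j * inner ℂ (ξ j) ((ρ j).π (g⁻¹ * h) (ξ j)) := by
      intro j
      simp only [M, Matrix.of_apply]
      rw [inner_smul_left, inner_smul_right, ← mul_assoc, Complex.conj_ofReal,
        ← Complex.ofReal_mul, Real.mul_self_sqrt (mul_nonneg (ht n) (hc j)), (ρ j).inner_inv,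
        ← (ρ j).mul_map]
      push_cast
      ring
    simp only [hM']
    rw [← add_div, ← neg_add, ← two_mul, neg_div, mul_div_cancel_left₀ _ two_ne_zero]
    push_cast
    rw [Finset.mul_sum, ← sub_eq_add_neg, ← Finset.sum_sub_distrib]
    refine Finset.sum_congr rfl fun j _ => ?_
    ring
  · simp [A, hnm]

theorem unit_re_sub {G : Type} [Group G] (ρ : UnitaryRep G) (ξ : ρ.H) (hξ : ‖ξ‖ = 1) (g : G) :
    (1 - inner ℂ ξ (ρ.π g ξ)).re = ‖ρ.π g ξ - ξ‖ ^ 2 / 2 := by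
  have h2 := norm_sub_sq (𝕜 := ℂ) (ρ.π g ξ) ξ
  rw [ρ.norm_map, hξ, ← inner_re_symm] at h2
  rw [h2]
  simp
  ring

theorem unit_norm_sub {G : Type} [Group G] (ρ : UnitaryRep G) (ξ : ρ.H) (hξ : ‖ξ‖ = 1) (g : G) :
    ‖1 - inner ℂ ξ (ρ.π g ξ)‖ ≤ ‖ρ.π g ξ - ξ‖ := by
  have h1 : (1 - inner ℂ ξ (ρ.π g ξ) : ℂ) = inner ℂ ξ (ξ - ρ.π g ξ) := by
    rw [inner_sub_right, inner_self_eq_norm_sq_to_K, hξ]; simp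
  rw [h1]
  refine (norm_inner_le_norm _ _).trans ?_
  rw [hξ, one_mul, norm_sub_rev]

theorem displacement_le {G : Type} [Group G] (ρ : UnitaryRep G) (ξ : ρ.H) (g a b : G) :
    ‖ρ.π g ξ - ξ‖ ≤ ‖ρ.π a ξ - ξ‖ + ‖ρ.π (a⁻¹ * g * b) ξ - ξ‖ + ‖ρ.π b⁻¹ ξ - ξ‖ := by
  have e : ρ.π g ξ - ξ = (ρ.π a ξ - ξ) + ρ.π a (ρ.π (a⁻¹ * g * b) ξ - ξ)
      + ρ.π (g * b) (ρ.π b⁻¹ ξ - ξ) := by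
    rw [map_sub, map_sub, ← ρ.mul_map, ← ρ.mul_map]
    have e1 : a * (a⁻¹ * g * b) = g * b := by group
    have e2 : g * b * b⁻¹ = g := by group
    rw [e1, e2]
    abel
  rw [e]
  refine (norm_add_le _ _).trans (add_le_add ((norm_add_le _ _).trans (add_le_add le_rfl ?_)) ?_)
  · rw [ρ.norm_map]
  · rw [ρ.norm_map]

/-- A countable ICC group without property (T) admits a weakly mixing unitary
representation with a sequence of almost invariant unit vectors. -/
theorem icc_not_propertyT_exists_weaklyMixing_almostInvariant
    (G : Type) [Group G] [Countable G] (hicc : IsICC G)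
    (hnT : ¬ GroupHasPropertyT G) :
    ∃ ρ : UnitaryRep G, ρ.WeaklyMixing ∧
      ∃ ξ : ℕ → ρ.H, (∀ i, ‖ξ i‖ = 1) ∧
        ∀ s : G, Tendsto (fun i => ‖ρ.π s (ξ i) - ξ i‖) atTop (nhds 0) := by
  classical
  obtain ⟨e, he⟩ := exists_surjective_nat G
  have hdata : ∀ j : ℕ, ∃ (ρ : UnitaryRep G) (ξ : ρ.H) (γ : G), ‖ξ‖ = 1 ∧
      (∀ g ∈ (Finset.range (j + 1)).image e, ‖ρ.π g ξ - ξ‖ ≤ (1 / 4 : ℝ) ^ j) ∧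
      1 ≤ ‖ρ.π γ ξ - ξ‖ := by
    intro j
    by_contra hcon
    refine hnT ⟨(Finset.range (j + 1)).image e, (1 / 4 : ℝ) ^ j, by positivity, ?_⟩
    intro ρ ξ hξ hQ
    refine exists_invariant_of_close ρ ξ hξ fun g => ?_
    by_contra hg
    exact hcon ⟨ρ, ξ, g, hξ, hQ, not_lt.1 hg⟩
  choose ρ ξ γ hξ hQ hγ using hdata
  have hsmall : ∀ g, ∀ᶠ j in atTop, ‖(ρ j).π g (ξ j) - ξ j‖ ≤ (1 / 4 : ℝ) ^ j := by
    intro g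
    obtain ⟨n, rfl⟩ := he g
    filter_upwards [eventually_ge_atTop n] with j hj
    exact hQ j _ (Finset.mem_image_of_mem e (Finset.mem_range.2 (by omega)))
  let c : ℕ → ℝ := fun j => 2 ^ j
  have hc : ∀ j, 0 ≤ c j := fun j => by positivity
  let u (g : G) (j : ℕ) : ℂ := (c j : ℂ) * (1 - inner ℂ (ξ j) ((ρ j).π g (ξ j)))
  have hsum : ∀ g, Summable (u g) := by
    intro g
    refine Summable.of_norm_bounded_eventually_nat (g := fun j : ℕ => (1 / 2 : ℝ) ^ j)
      summable_geometric_two ?_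
    filter_upwards [hsmall g] with j hj
    have h1 := unit_norm_sub (ρ j) (ξ j) (hξ j) g
    have h2 : ‖(c j : ℂ)‖ = 2 ^ j := by simp [c]
    calc ‖u g j‖ = 2 ^ j * ‖1 - inner ℂ (ξ j) ((ρ j).π g (ξ j))‖ := by rw [norm_mul, h2]
      _ ≤ 2 ^ j * (1 / 4 : ℝ) ^ j := by gcongr; exact h1.trans hj
      _ = (1 / 2 : ℝ) ^ j := by rw [← mul_pow]; norm_num
  let F (g : G) : ℂ := ∑' j, u g j
  have hF : ∀ g, HasSum (u g) (F g) := fun g => (hsum g).hasSum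
  have hre : ∀ g j, (u g j).re = 2 ^ j * (‖(ρ j).π g (ξ j) - ξ j‖ ^ 2 / 2) := by
    intro g j
    rw [← unit_re_sub (ρ j) (ξ j) (hξ j) g, Complex.re_ofReal_mul]
  have hFre : ∀ g k, 2 ^ k * (‖(ρ k).π g (ξ k) - ξ k‖ ^ 2 / 2) ≤ (F g).re := by
    intro g k
    have h1 := Complex.hasSum_re (hF g)
    rw [← hre]
    exact le_hasSum h1 k fun j _ => by rw [hre]; positivity
  have hF1 : F 1 = 0 := by
    have : u 1 = fun _ => 0 := by
      funext j
      simp only [u]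
      rw [(ρ j).one_map, inner_self_eq_norm_sq_to_K, hξ]
      simp
    simp only [F, this, tsum_zero]
  let t : ℕ → ℝ := fun n => 1 / ((n : ℝ) + 1)
  have ht : ∀ n, 0 < t n := fun n => by positivity
  have hsm : ∀ (g : G) (n : ℕ) (a : G),
      g • (⟨n, a⟩ : Σ _ : ℕ, G) = ⟨n, g * a⟩ := fun _ _ _ => rfl
  obtain ⟨σ, δ, hδ, hσ, hdense⟩ := gns_exists (G := G) _
    (posSemidef_mainKernel ρ ξ c hc t (fun n => (ht n).le) F hF) (by
      rintro g ⟨n, a⟩ ⟨m, b⟩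
      rw [hsm, hsm]
      simp only [Matrix.of_apply]
      congr 4
      group)
  simp only [Matrix.of_apply] at hδ
  have hnorm : ∀ n, ‖δ ⟨n, 1⟩‖ = 1 := by
    intro n
    have h1 := hδ ⟨n, 1⟩ ⟨n, 1⟩
    simp only [Matrix.one_apply_eq, inv_one, one_mul, hF1, mul_zero, Complex.exp_zero] at h1
    have h2 := inner_self_eq_norm_sq (𝕜 := ℂ) (δ ⟨n, 1⟩)
    rw [h1] at h2
    have h3 := norm_nonneg (δ ⟨n, 1⟩)
    simp only [RCLike.one_re] at h2
    nlinarith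
  refine ⟨σ, ?_, fun n => δ ⟨n, 1⟩, ?_, ?_⟩
  · refine weaklyMixing_of_total σ _ hdense γ ?_
    rintro _ ⟨⟨n, a⟩, rfl⟩ _ ⟨⟨m, b⟩, rfl⟩
    have h1 : Tendsto (fun k => (F ((γ k * a)⁻¹ * b)).re) atTop atTop := by
      refine tendsto_atTop_mono' atTop (f₁ := fun k : ℕ => (2 : ℝ) ^ k * (1 / 8)) ?_
        ((tendsto_pow_atTop_atTop_of_one_lt one_lt_two).atTop_mul_const (by norm_num))
      have hq : ∀ᶠ j : ℕ in atTop, (1 / 4 : ℝ) ^ j ≤ 1 / 4 := by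
        filter_upwards [eventually_ge_atTop 1] with j hj
        simpa using pow_le_pow_of_le_one (by norm_num : (0 : ℝ) ≤ 1 / 4) (by norm_num) hj
      filter_upwards [hsmall b, hsmall a⁻¹, hq] with k hb ha hk
      refine le_trans ?_ (hFre _ k)
      have h4 := displacement_le (ρ k) (ξ k) (γ k) b⁻¹⁻¹ a
      have h5 : ‖(ρ k).π (b⁻¹⁻¹⁻¹ * γ k * a) (ξ k) - ξ k‖
          = ‖(ρ k).π ((γ k * a)⁻¹ * b) (ξ k) - ξ k‖ := by
        rw [← (ρ k).norm_map ((γ k * a)⁻¹ * b), map_sub, ← (ρ k).mul_map, norm_sub_rev]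
        have e1 : (γ k * a)⁻¹ * b * (b⁻¹⁻¹⁻¹ * γ k * a) = 1 := by group
        rw [e1, (ρ k).one_map]
      rw [h5, inv_inv] at h4
      have h6 : (1 / 2 : ℝ) ≤ ‖(ρ k).π ((γ k * a)⁻¹ * b) (ξ k) - ξ k‖ := by
        have := hγ k
        linarith
      have h7 : (1 / 8 : ℝ) ≤ ‖(ρ k).π ((γ k * a)⁻¹ * b) (ξ k) - ξ k‖ ^ 2 / 2 := by nlinarith
      exact mul_le_mul_of_nonneg_left h7 (by positivity)
    simp only [hσ, hsm, hδ]
    have h2 : Tendsto (fun k => Real.exp (-(t n * (F ((γ k * a)⁻¹ * b)).re))) atTop (nhds 0) :=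
      Real.tendsto_exp_neg_atTop_nhds_zero.comp (h1.const_mul_atTop (ht n))
    refine squeeze_zero_norm (fun k => ?_) h2
    rw [norm_mul, Complex.norm_exp]
    have h3 : ‖(1 : Matrix ℕ ℕ ℂ) n m‖ ≤ 1 := by
      rw [Matrix.one_apply]; split_ifs <;> simp
    refine (mul_le_of_le_one_left (Real.exp_pos _).le h3).trans (le_of_eq ?_)
    congr 1
    simp
  · exact hnorm
  · intro s
    have hn : ∀ n, ‖σ.π s (δ ⟨n, 1⟩) - δ ⟨n, 1⟩‖ ^ 2
        = 2 - 2 * (Complex.exp (-(t n : ℂ) * F s⁻¹)).re := by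
      intro n
      rw [norm_sub_sq (𝕜 := ℂ), σ.norm_map, hnorm, hσ, hsm, hδ]
      simp only [Matrix.one_apply_eq, one_mul, mul_one, one_pow]
      change 1 - 2 * (Complex.exp (-(t n : ℂ) * F s⁻¹)).re + 1 = _
      ring
    have htt : Tendsto (fun n => (t n : ℂ)) atTop (nhds 0) := by
      have := (Complex.continuous_ofReal.tendsto 0).comp
        (tendsto_one_div_add_atTop_nhds_zero_nat (𝕜 := ℝ))
      rw [Complex.ofReal_zero] at this
      exact this
    have h2 : Tendsto (fun n => ‖σ.π s (δ ⟨n, 1⟩) - δ ⟨n, 1⟩‖ ^ 2) atTop (nhds 0) := by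
      simp only [hn]
      have h3 := (Complex.continuous_re.tendsto _).comp ((htt.neg.mul_const (F s⁻¹)).cexp)
      have h4 := (h3.const_mul 2).const_sub 2
      simpa using h4
    have h5 := h2.sqrt
    simpa [Real.sqrt_sq (norm_nonneg _)] using h5
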